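/- Let ε ∈ (0,1) be irrational with continued fraction expansion ε = [0; a_1, a_2, …] whose partial quotients are bounded, set K := sup_{n} a_n, let ℓ satisfy max{ε, 1−ε} < ℓ < 1, and let x0 ∈ [0,ℓ). Then the index of the 3iet word satisfies ⌊K/2⌋ ≤ ind(u_{ε,ℓ,x0}) ≤ K + 3. -/

import Mathlib

/-!
The exchange `T_{ε,ℓ}` is the map induced on `[0, ℓ)` by the rotation `x ↦ x - ε` of the circle
`ℝ / ℤ`: the letters `A` and `C` take one rotation step and `B` takes two. Let `q_n` be the
denominators of the convergents `p_n / q_n` of `ε` and `d_n = q_n ε - p_n`.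

*Upper bound.* Suppose the itinerary has period `n` over `n + m` letters. On this stretch the `n`-th
iterate is the translation by a fixed `δ ≡ -N ε`, where `N` is the number of rotation steps in a
period, so the orbit avoids an end interval of `[0, ℓ)` of length `|δ|`. If `q_r ≤ N < q_{r+1}`,
then `|δ| ≥ |d_r|` by best approximation, whereas the rotation meets every half-open arc of
length `|d_r|` within `q_{r+1} + q_r ≤ (K + 2) q_r ≤ (K + 2) N` steps. Hence `m < (K + 2) n`.

*Lower bound.* Let the partial quotient `K` be attained at `q_{r+1} ≥ K q_r`, let `N = q_r`,
`δ = -d_r` and `t + 1 = ⌊K / 2⌋`. If no point of a stretch of `t N + 1` rotation steps crosses one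
of the cuts `0` and `ℓ` when translated by `δ`, then the stretch and its translate have the same
itinerary, which yields a `(t + 1)`-st power. The starting points violating this condition fill
`2 (t N + 1)` arcs of length `|d_r|`, of total length at most `q_{r+1} |d_r| < 1`, so the dense
orbit of `x0` meets their complement.
-/

/-- The alphabet of 3iet words. -/
inductive L3 | A | B | C
deriving DecidableEq, Inhabited

/-- The three-interval exchange transformation `T_{ε,ℓ}`. -/
noncomputable def T3 (ε ℓ : ℝ) (x : ℝ) : ℝ :=
  if x < ℓ - 1 + ε then x + 1 - ε
  else if x < ε then x + 1 - 2*ε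
  else x - ε

/-- The 3iet word `u_{ε,ℓ,x0}` coding the orbit of `x0` under `T_{ε,ℓ}`. -/
noncomputable def u3 (ε ℓ x0 : ℝ) (n : ℕ) : L3 :=
  if (T3 ε ℓ)^[n] x0 < ℓ - 1 + ε then L3.A
  else if (T3 ε ℓ)^[n] x0 < ε then L3.B
  else L3.C

/-- The two-interval exchange transformation `T_ε`. -/
noncomputable def T2 (ε : ℝ) (x : ℝ) : ℝ := if x < ε then x + 1 - ε else x - ε

/-- The Sturmian word `u_{ε,x0}` of slope `ε` coding the orbit of `x0` under `T_ε`
(letter `0` is `false`, letter `1` is `true`). -/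
noncomputable def u2 (ε x0 : ℝ) (n : ℕ) : Bool := if (T2 ε)^[n] x0 < ε then false else true

/-- `w` is a factor of the infinite word `u`. -/
def IsFactor {α : Type*} (w : List α) (u : ℕ → α) : Prop :=
  ∃ i : ℕ, w = (List.range w.length).map fun j => u (i + j)

/-- The prefix of length `m` of the periodic infinite word `www⋯`;
for `|w| ≤ m` this is the fractional power `w^{m/|w|}`. -/
def powPrefix {α : Type*} [Inhabited α] (w : List α) (m : ℕ) : List α :=
  (List.range m).map fun j => w.getD (j % w.length) default

/-- The index of the factor `w` in the infinite word `u`: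
`sup {r ∈ ℚ, r ≥ 1, r|w| ∈ ℕ | w^r is a factor of u}`, as an element of `ℝ ∪ {+∞}`. -/
noncomputable def factorIndex {α : Type*} [Inhabited α] (u : ℕ → α) (w : List α) : EReal :=
  sSup {x : EReal | ∃ m : ℕ, w.length ≤ m ∧ IsFactor (powPrefix w m) u ∧
    x = (((m : ℝ) / (w.length : ℝ) : ℝ) : EReal)}

/-- The index of the infinite word `u`: `sup {ind(w) | w a nonempty factor of u}`. -/
noncomputable def wordIndex {α : Type*} [Inhabited α] (u : ℕ → α) : EReal :=
  sSup {x : EReal | ∃ w : List α, w ≠ [] ∧ IsFactor w u ∧ x = factorIndex u w}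

/-- The Gauss map `x ↦ {1/x}`. -/
noncomputable def gaussMap (x : ℝ) : ℝ := Int.fract x⁻¹

/-- `cfa ε n` is the partial quotient `a_{n+1}` of the continued fraction
expansion `ε = [0; a₁, a₂, a₃, …]` of the irrational `ε ∈ (0,1)`. -/
noncomputable def cfa (ε : ℝ) (n : ℕ) : ℕ := ⌊(gaussMap^[n] ε)⁻¹⌋₊

/-- The morphism `σ01 : A ↦ 0, B ↦ 01, C ↦ 1`. -/
def sigma01 : L3 → List Bool
  | L3.A => [false]
  | L3.B => [false, true]
  | L3.C => [true]

/-- The morphism `σ10 : A ↦ 0, B ↦ 10, C ↦ 1`. -/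
def sigma10 : L3 → List Bool
  | L3.A => [false]
  | L3.B => [true, false]
  | L3.C => [true]

/-- The image `φ(u₀)φ(u₁)φ(u₂)⋯` of an infinite word `u` under a (nonerasing) morphism `φ`. -/
def morphWord (φ : L3 → List Bool) (u : ℕ → L3) (m : ℕ) : Bool :=
  ((List.range (m+1)).flatMap fun k => φ (u k)).getD m false

/-- `u` is a uniformly recurrent infinite word: every factor occurs infinitely often
with bounded gaps (every window of some length `R` contains an occurrence). -/
def UniformlyRecurrent {α : Type*} (u : ℕ → α) : Prop :=
  ∀ w : List α, IsFactor w u → ∃ R : ℕ, ∀ i : ℕ, ∃ j : ℕ, i ≤ j ∧ j < i + R ∧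
    w = (List.range w.length).map fun t => u (j + t)

/-- `u` is eventually periodic. -/
def EventuallyPeriodic {α : Type*} (u : ℕ → α) : Prop :=
  ∃ N p : ℕ, 0 < p ∧ ∀ n : ℕ, N ≤ n → u (n + p) = u n

/-- The standard words of `ε = [0; a₁, a₂, …]`, with the index shifted by one:
`sw ε 0 = s₋₁ = 1`, `sw ε 1 = s₀ = 0`, `sw ε 2 = s₁ = s₀^{a₁-1} s₋₁`, and
`sw ε (n+3) = s_{n+2} = s_{n+1}^{a_{n+2}} s_n`. -/
noncomputable def sw (ε : ℝ) : ℕ → List Bool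
  | 0 => [true]
  | 1 => [false]
  | 2 => (List.replicate (cfa ε 0 - 1) ([false] : List Bool)).flatten ++ [true]
  | (n+3) => (List.replicate (cfa ε (n+1)) (sw ε (n+2))).flatten ++ sw ε (n+1)

/-- Denominators of the convergents of `ε`, shifted by one: `qq ε 0 = q₋₁ = 0`,
`qq ε 1 = q₀ = 1`, and `qq ε (n+2) = q_{n+1} = a_{n+1} q_n + q_{n-1}`. -/
noncomputable def qq (ε : ℝ) : ℕ → ℕ
  | 0 => 0
  | 1 => 1
  | (n+2) => cfa ε n * qq ε (n+1) + qq ε n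

/-- `u` is a 3iet word. -/
def Is3ietWord (u : ℕ → L3) : Prop :=
  ∃ ε ℓ x0 : ℝ, Irrational ε ∧ 0 < ε ∧ ε < 1 ∧ max ε (1 - ε) < ℓ ∧ ℓ < 1 ∧
    x0 ∈ Set.Ico 0 ℓ ∧ u = u3 ε ℓ x0

/-- `v` is a Sturmian word. -/
def IsSturmianWord (v : ℕ → Bool) : Prop :=
  ∃ ε x0 : ℝ, Irrational ε ∧ 0 < ε ∧ ε < 1 ∧ x0 ∈ Set.Ico (0:ℝ) 1 ∧ v = u2 ε x0

/-- The infinite binary word `v1` is amicable with `v2` (`v1 ∝ v2`). -/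
def AmicableInf (v1 v2 : ℕ → Bool) : Prop :=
  ∃ w : ℕ → L3, v1 = morphWord sigma01 w ∧ v2 = morphWord sigma10 w

/-- The morphism `Φ_k : A ↦ 0, B ↦ 01^{k+1}, C ↦ 01^k`. -/
def Phi (k : ℕ) : L3 → List Bool
  | L3.A => [false]
  | L3.B => false :: List.replicate (k+1) true
  | L3.C => false :: List.replicate k true

/-- The infinite word `B₀B₁B₂⋯` obtained by concatenating the sequence of
(nonempty) blocks `B`. -/
def concatOfBlocks (B : ℕ → List Bool) (m : ℕ) : Bool :=
  ((List.range (m+1)).flatMap B).getD m false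

section ContinuedFraction

variable {ε : ℝ}

/-- The numerators of the convergents of `ε`, with the index shift of `qq`:
`convergentNum ε 0 = p₋₁ = 1` and `convergentNum ε 1 = p₀ = 0`. -/
noncomputable def convergentNum (ε : ℝ) : ℕ → ℕ
  | 0 => 1
  | 1 => 0
  | (n + 2) => cfa ε n * convergentNum ε (n + 1) + convergentNum ε n

/-- The signed error `q ε - p` of the convergent `p / q` of `ε`, with the index shift of `qq`. -/
noncomputable def convergentError (ε : ℝ) (n : ℕ) : ℝ := qq ε n * ε - convergentNum ε n

lemma irrational_iterate_gaussMap (hε : Irrational ε) (n : ℕ) : Irrational (gaussMap^[n] ε) := by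
  induction n with
  | zero => exact hε
  | succ n ih =>
    rw [Function.iterate_succ_apply', gaussMap, ← Int.self_sub_floor]
    exact ih.inv.sub_intCast _

lemma iterate_gaussMap_pos (hε : Irrational ε) (h0 : 0 < ε) (n : ℕ) : 0 < gaussMap^[n] ε := by
  cases n with
  | zero => exact h0
  | succ n =>
    refine lt_of_le_of_ne ?_ (irrational_iterate_gaussMap hε _).ne_zero.symm
    rw [Function.iterate_succ_apply']
    exact Int.fract_nonneg _

lemma iterate_gaussMap_lt_one (h1 : ε < 1) (n : ℕ) : gaussMap^[n] ε < 1 := by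
  cases n with
  | zero => exact h1
  | succ n =>
    rw [Function.iterate_succ_apply']
    exact Int.fract_lt_one _

lemma cfa_add_iterate_gaussMap (hε : Irrational ε) (h0 : 0 < ε) (n : ℕ) :
    cfa ε n + gaussMap^[n + 1] ε = (gaussMap^[n] ε)⁻¹ := by
  rw [Function.iterate_succ_apply', cfa,
    natCast_floor_eq_intCast_floor (inv_nonneg.2 (iterate_gaussMap_pos hε h0 n).le)]
  exact Int.floor_add_fract _

lemma one_le_cfa (hε : Irrational ε) (h0 : 0 < ε) (h1 : ε < 1) (n : ℕ) : 1 ≤ cfa ε n :=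
  Nat.one_le_floor_iff _ |>.2
    ((one_lt_inv₀ (iterate_gaussMap_pos hε h0 n)).2 (iterate_gaussMap_lt_one h1 n)).le

lemma qq_add_two (ε : ℝ) (n : ℕ) : qq ε (n + 2) = cfa ε n * qq ε (n + 1) + qq ε n := rfl

lemma convergentNum_add_two (ε : ℝ) (n : ℕ) :
    convergentNum ε (n + 2) = cfa ε n * convergentNum ε (n + 1) + convergentNum ε n := rfl

lemma convergentError_add_two (ε : ℝ) (n : ℕ) :
    convergentError ε (n + 2) = cfa ε n * convergentError ε (n + 1) + convergentError ε n := by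
  simp only [convergentError, qq_add_two, convergentNum_add_two]
  push_cast
  ring

lemma one_le_qq_succ (hε : Irrational ε) (h0 : 0 < ε) (h1 : ε < 1) (n : ℕ) :
    1 ≤ qq ε (n + 1) := by
  induction n with
  | zero => exact le_rfl
  | succ n ih =>
    rw [qq_add_two]
    exact le_add_right (one_le_mul (one_le_cfa hε h0 h1 n) ih)

lemma qq_le_qq_succ (hε : Irrational ε) (h0 : 0 < ε) (h1 : ε < 1) (n : ℕ) :
    qq ε n ≤ qq ε (n + 1) := by
  cases n with
  | zero => exact Nat.zero_le _
  | succ n =>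
    rw [qq_add_two]
    exact le_add_right (Nat.le_mul_of_pos_left _ (one_le_cfa hε h0 h1 n))

lemma le_qq_succ (hε : Irrational ε) (h0 : 0 < ε) (h1 : ε < 1) (n : ℕ) : n ≤ qq ε (n + 1) := by
  induction n with
  | zero => exact Nat.zero_le _
  | succ n ih =>
    rw [qq_add_two]
    have hmul := Nat.le_mul_of_pos_left (qq ε (n + 1)) (one_le_cfa hε h0 h1 n)
    cases n with
    | zero => exact le_add_right (one_le_mul (one_le_cfa hε h0 h1 0) le_rfl)
    | succ n => linarith [one_le_qq_succ hε h0 h1 n]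

lemma exists_qq_succ_le_lt (hε : Irrational ε) (h0 : 0 < ε) (h1 : ε < 1) {N : ℕ} (hN : 0 < N) :
    ∃ r, qq ε (r + 1) ≤ N ∧ N < qq ε (r + 2) := by
  simpa only [not_lt] using Nat.exists_not_and_succ_of_not_zero_of_exists
    (p := fun r => N < qq ε (r + 1)) (not_lt.2 hN) ⟨N + 1, le_qq_succ hε h0 h1 (N + 1)⟩

lemma convergentError_succ (hε : Irrational ε) (h0 : 0 < ε) (n : ℕ) :
    convergentError ε (n + 1) = -(gaussMap^[n] ε * convergentError ε n) := by
  induction n with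
  | zero => simp [convergentError, qq, convergentNum]
  | succ n ih =>
    have hmul : (cfa ε n + gaussMap^[n + 1] ε) * gaussMap^[n] ε = 1 := by
      rw [cfa_add_iterate_gaussMap hε h0, inv_mul_cancel₀ (iterate_gaussMap_pos hε h0 n).ne']
    rw [convergentError_add_two, ih]
    linear_combination -convergentError ε n * hmul

lemma abs_convergentError_succ (hε : Irrational ε) (h0 : 0 < ε) (n : ℕ) :
    |convergentError ε (n + 1)| = gaussMap^[n] ε * |convergentError ε n| := by
  rw [convergentError_succ hε h0, abs_neg, abs_mul, abs_of_pos (iterate_gaussMap_pos hε h0 n)]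

lemma abs_convergentError_pos (hε : Irrational ε) (h0 : 0 < ε) (n : ℕ) :
    0 < |convergentError ε n| := by
  induction n with
  | zero => simp [convergentError, qq, convergentNum]
  | succ n ih =>
    rw [abs_convergentError_succ hε h0]
    exact mul_pos (iterate_gaussMap_pos hε h0 n) ih

lemma qq_succ_mul_abs_convergentError_add_eq_one (hε : Irrational ε) (h0 : 0 < ε) (n : ℕ) :
    qq ε (n + 1) * |convergentError ε n| + qq ε n * |convergentError ε (n + 1)| = 1 := by
  induction n with
  | zero => simp [convergentError, qq, convergentNum]
  | succ n ih =>
    have hinv : |convergentError ε n| = (gaussMap^[n] ε)⁻¹ * |convergentError ε (n + 1)| := by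
      rw [abs_convergentError_succ hε h0, inv_mul_cancel_left₀ (iterate_gaussMap_pos hε h0 n).ne']
    rw [abs_convergentError_succ hε h0 (n + 1), qq_add_two, ← ih, hinv,
      ← cfa_add_iterate_gaussMap hε h0]
    push_cast
    ring

lemma qq_succ_mul_abs_convergentError_lt_one (hε : Irrational ε) (h0 : 0 < ε) (h1 : ε < 1)
    (n : ℕ) : qq ε (n + 2) * |convergentError ε (n + 1)| < 1 := by
  have hq : (0 : ℝ) < qq ε (n + 1) := Nat.cast_pos.2 (one_le_qq_succ hε h0 h1 n)
  linarith [qq_succ_mul_abs_convergentError_add_eq_one hε h0 (n + 1),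
    mul_pos hq (abs_convergentError_pos hε h0 (n + 2))]

lemma qq_succ_mul_convergentNum_sub (ε : ℝ) (n : ℕ) :
    (qq ε (n + 1) : ℤ) * convergentNum ε n - qq ε n * convergentNum ε (n + 1) = (-1) ^ n := by
  induction n with
  | zero => simp [qq, convergentNum]
  | succ n ih =>
    rw [qq_add_two, convergentNum_add_two, pow_succ, ← ih]
    push_cast
    ring

lemma exists_eq_mul_qq_add_and_eq_mul_convergentNum_add (ε : ℝ) (n : ℕ) (N P : ℤ) :
    ∃ u v : ℤ, N = u * qq ε n + v * qq ε (n + 1) ∧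
      P = u * convergentNum ε n + v * convergentNum ε (n + 1) := by
  have hdet := qq_succ_mul_convergentNum_sub ε n
  have hsq : ((-1 : ℤ) ^ n) * (-1) ^ n = 1 := by rw [← mul_pow]; simp
  refine ⟨(-1) ^ n * (P * qq ε (n + 1) - N * convergentNum ε (n + 1)),
    (-1) ^ n * (N * convergentNum ε n - P * qq ε n), ?_, ?_⟩
  · linear_combination (-N) * hsq - N * (-1) ^ n * hdet
  · linear_combination (-P) * hsq - P * (-1) ^ n * hdet

lemma one_le_abs_sub_mul {u v q q' : ℤ} (hq : 0 ≤ q) (hpos : 0 < u * q + v * q')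
    (hlt : u * q + v * q' < q') {θ : ℝ} (hθ : 0 ≤ θ) : 1 ≤ |u - v * θ| := by
  rcases le_or_gt v 0 with hv | hv
  · have hu : 1 ≤ u := by
      by_contra! hu
      nlinarith
    have hu' : (1 : ℝ) ≤ u := mod_cast hu
    have hv' : (v : ℝ) ≤ 0 := mod_cast hv
    exact le_trans (by nlinarith) (le_abs_self _)
  · have hu : u ≤ -1 := by
      by_contra! hu
      nlinarith
    have hu' : (u : ℝ) ≤ -1 := mod_cast hu
    have hv' : (0 : ℝ) < v := mod_cast hv
    exact le_trans (by nlinarith) (neg_le_abs _)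

lemma abs_convergentError_le_abs_mul_sub (hε : Irrational ε) (h0 : 0 < ε) {n N : ℕ} (hN : 0 < N)
    (hlt : N < qq ε (n + 1)) (P : ℤ) : |convergentError ε n| ≤ |N * ε - P| := by
  obtain ⟨u, v, hu, hv⟩ := exists_eq_mul_qq_add_and_eq_mul_convergentNum_add ε n N P
  have hcoeff : 1 ≤ |u - v * gaussMap^[n] ε| :=
    one_le_abs_sub_mul (q := qq ε n) (q' := qq ε (n + 1)) (by positivity)
      (by rw [← hu]; exact_mod_cast hN) (by rw [← hu]; exact_mod_cast hlt)
      (iterate_gaussMap_pos hε h0 n).le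
  have heq : N * ε - P = (u - v * gaussMap^[n] ε) * convergentError ε n := by
    have hu' : (N : ℝ) = u * qq ε n + v * qq ε (n + 1) := mod_cast hu
    have hv' : (P : ℝ) = u * convergentNum ε n + v * convergentNum ε (n + 1) := mod_cast hv
    have hsucc := convergentError_succ hε h0 n
    simp only [convergentError] at hsucc ⊢
    rw [hu', hv']
    linear_combination v * hsucc
  rw [heq, abs_mul]
  exact le_mul_of_one_le_left (abs_nonneg _) hcoeff

end ContinuedFraction

section Rotation

variable {ε : ℝ}

lemma denseRange_sub_nsmul (hε : Irrational ε) (x : UnitAddCircle) :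
    DenseRange fun j : ℕ => x - j • (ε : UnitAddCircle) := by
  have hmul : DenseRange fun j : ℕ => j • ((-ε : ℝ) : UnitAddCircle) := by
    rw [← denseRange_zsmul_iff_nsmul]
    exact AddCircle.denseRange_zsmul_coe_iff.2 (by simpa using hε.neg)
  simpa [Function.comp_def, sub_eq_add_neg] using
    (Homeomorph.addLeft x).surjective.denseRange.comp hmul (Homeomorph.addLeft x).continuous

lemma coe_convergentError (ε : ℝ) (n : ℕ) :
    (convergentError ε n : UnitAddCircle) = qq ε n • (ε : UnitAddCircle) := by
  have hnum : ((convergentNum ε n : ℝ) : UnitAddCircle) = 0 :=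
    (AddCircle.coe_eq_zero_iff 1).2 ⟨convergentNum ε n, by simp⟩
  rw [convergentError, AddCircle.coe_sub, hnum, sub_zero, ← nsmul_eq_mul, AddCircle.coe_nsmul]

lemma abs_convergentError_le_norm_nsmul (hε : Irrational ε) (h0 : 0 < ε) {n N : ℕ} (hN : 0 < N)
    (hlt : N < qq ε (n + 1)) : |convergentError ε n| ≤ ‖N • (ε : UnitAddCircle)‖ := by
  rw [← AddCircle.coe_nsmul, nsmul_eq_mul, UnitAddCircle.norm_eq]
  exact abs_convergentError_le_abs_mul_sub hε h0 hN hlt _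

lemma sub_mul_mem_Ico_or {c d z θ : ℝ} (hθ0 : 0 ≤ θ) (hθ1 : θ ≤ 1)
    (hz : z ∈ Set.Ico c (c + |d|)) :
    z - θ * d ∈ Set.Ico c (c + |d|) ∨ z - θ * d + d ∈ Set.Ico c (c + |d|) := by
  obtain ⟨hcz, hzc⟩ := hz
  rcases le_or_gt 0 d with hd | hd
  · rw [abs_of_nonneg hd] at hzc ⊢
    rcases le_or_gt c (z - θ * d) with h | h
    · exact .inl ⟨h, by nlinarith⟩
    · exact .inr ⟨by nlinarith, by linarith⟩
  · rw [abs_of_neg hd] at hzc ⊢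
    rcases lt_or_ge (z - θ * d) (c + -d) with h | h
    · exact .inl ⟨by nlinarith, h⟩
    · exact .inr ⟨by linarith, by nlinarith⟩

/-- From a visit to an arc of length `|dₙ|`, where `dₙ = convergentError ε n`, going back in time by
`qₙ₊₁` moves the point by `dₙ₊₁ = -θ dₙ`, and by `qₙ` more moves it by a further `dₙ`. -/
lemma exists_lt_orbit_mem_Ico (hε : Irrational ε) (h0 : 0 < ε) (h1 : ε < 1) (n : ℕ)
    (x : UnitAddCircle) (c : ℝ) :
    ∃ j < qq ε (n + 1) + qq ε n, ∃ z ∈ Set.Ico c (c + |convergentError ε n|),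
      (z : UnitAddCircle) = x - j • (ε : UnitAddCircle) := by
  obtain ⟨j, z, hz, hzj⟩ : ∃ j : ℕ, ∃ z ∈ Set.Ioo c (c + |convergentError ε n|),
      (z : UnitAddCircle) = x - j • (ε : UnitAddCircle) :=
    (denseRange_sub_nsmul hε x).exists_mem_open (QuotientAddGroup.isOpenMap_coe _ isOpen_Ioo)
      ((Set.nonempty_Ioo.2 (lt_add_of_pos_right c (abs_convergentError_pos hε h0 n))).image _)
  replace hz := Set.Ioo_subset_Ico_self hz
  induction j using Nat.strong_induction_on generalizing z with
  | _ j ih =>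
    rcases lt_or_ge j (qq ε (n + 1) + qq ε n) with hj | hj
    · exact ⟨j, hj, z, hz, hzj⟩
    obtain ⟨i, rfl⟩ := Nat.exists_eq_add_of_le hj
    have hq := one_le_qq_succ hε h0 h1 n
    have hback : ((z + convergentError ε (n + 1) : ℝ) : UnitAddCircle) =
        x - (qq ε n + i) • (ε : UnitAddCircle) := by
      rw [AddCircle.coe_add, hzj, coe_convergentError]
      module
    have hback' : ((z + convergentError ε (n + 1) + convergentError ε n : ℝ) : UnitAddCircle) =
        x - i • (ε : UnitAddCircle) := by
      rw [AddCircle.coe_add, hback, coe_convergentError]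
      module
    have hmem := sub_mul_mem_Ico_or (iterate_gaussMap_pos hε h0 n).le
      (iterate_gaussMap_lt_one h1 n).le hz
    rw [sub_eq_add_neg, ← convergentError_succ hε h0] at hmem
    rcases hmem with hmem | hmem
    · exact ih _ (by omega) _ hback hmem
    · exact ih _ (by omega) _ hback' hmem

/-- The translation by `δ` takes `z` to `z + δ` without crossing the cut point `c` of the circle:
`c` lies outside the closed arc of length `|δ|` centred at the midpoint of the move. -/
def ClearsCut (c : UnitAddCircle) (δ : ℝ) (z : UnitAddCircle) : Prop :=
  |δ| / 2 < ‖z + (δ / 2 : ℝ) - c‖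

lemma ClearsCut.add_lt_iff {c δ z : ℝ} (h : ClearsCut c δ z) : z + δ < c ↔ z < c := by
  have hlt : |δ| / 2 < |z + δ / 2 - c| := h.trans_le QuotientAddGroup.norm_mk_le_norm
  obtain ⟨hδ, hδ'⟩ := abs_le.1 (le_refl |δ|)
  rcases lt_abs.1 hlt with h | h <;> constructor <;> intro <;> linarith

lemma exists_orbit_forall_lt_dist (hε : Irrational ε) (x : UnitAddCircle) (s : Finset UnitAddCircle)
    {r : ℝ} (hs : s.card * (2 * r) < 1) :
    ∃ i : ℕ, ∀ c ∈ s, r < dist (x - i • (ε : UnitAddCircle)) c := by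
  let S : Set UnitAddCircle := ⋃ c ∈ s, Metric.closedBall c r
  have hclosed : IsClosed S := isClosed_biUnion_finset fun _ _ => Metric.isClosed_closedBall
  have hvol : MeasureTheory.volume S < 1 :=
    calc MeasureTheory.volume S
      _ ≤ ∑ c ∈ s, MeasureTheory.volume (Metric.closedBall c r) :=
          MeasureTheory.measure_biUnion_finset_le _ _
      _ ≤ ∑ _c ∈ s, ENNReal.ofReal (2 * r) := Finset.sum_le_sum fun c _ => by
          rw [AddCircle.volume_closedBall]
          exact ENNReal.ofReal_le_ofReal (min_le_right _ _)
      _ = ENNReal.ofReal (s.card * (2 * r)) := by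
          rw [Finset.sum_const, nsmul_eq_mul, ENNReal.ofReal_mul (Nat.cast_nonneg _),
            ENNReal.ofReal_natCast]
      _ < 1 := ENNReal.ofReal_lt_one.2 hs
  have hne : Sᶜ.Nonempty := by
    rw [Set.nonempty_compl]
    intro huniv
    rw [huniv, UnitAddCircle.measure_univ] at hvol
    exact hvol.false
  obtain ⟨i, hi⟩ := (denseRange_sub_nsmul hε x).exists_mem_open hclosed.isOpen_compl hne
  refine ⟨i, fun c hc => ?_⟩
  by_contra! hle
  exact hi (Set.mem_biUnion hc hle)

lemma exists_orbit_forall_clearsCut (hε : Irrational ε) (x : UnitAddCircle)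
    (C : Finset UnitAddCircle) {δ : ℝ} {M : ℕ} (hM : (M + 1) * C.card * |δ| < 1) :
    ∃ i : ℕ, ∀ c ∈ C, ∀ j ≤ M,
      ClearsCut c δ (x - i • (ε : UnitAddCircle) - j • (ε : UnitAddCircle)) := by
  let centre : ℕ × UnitAddCircle → UnitAddCircle :=
    fun p => p.2 + p.1 • (ε : UnitAddCircle) - (δ / 2 : ℝ)
  have hcard : (((Finset.range (M + 1) ×ˢ C).image centre).card : ℝ) ≤ (M + 1) * C.card := by
    have := Finset.card_image_le (s := Finset.range (M + 1) ×ˢ C) (f := centre)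
    rw [Finset.card_product, Finset.card_range] at this
    exact_mod_cast this
  obtain ⟨i, hi⟩ := exists_orbit_forall_lt_dist hε x _ (r := |δ| / 2)
    (lt_of_le_of_lt (by gcongr; linarith) hM)
  refine ⟨i, fun c hc j hj => ?_⟩
  have heq : x - i • (ε : UnitAddCircle) - j • (ε : UnitAddCircle) + (δ / 2 : ℝ) - c =
      x - i • (ε : UnitAddCircle) - centre (j, c) := by
    simp only [centre]
    abel
  rw [ClearsCut, heq, ← dist_eq_norm]
  exact hi _ (Finset.mem_image_of_mem _
    (Finset.mk_mem_product (Finset.mem_range.2 (Nat.lt_succ_of_le hj)) hc))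

end Rotation

section Index

variable {α : Type*} {u : ℕ → α} {n m : ℕ}

/-- The prefix of length `n + m` of the word `u` has period `n`: it is the power of exponent
`(n + m) / n` of the prefix of length `n`. -/
def PrefixHasPeriod (u : ℕ → α) (n m : ℕ) : Prop := ∀ k < m, u (n + k) = u k

lemma PrefixHasPeriod.mono {m' : ℕ} (h : PrefixHasPeriod u n m) (hm : m' ≤ m) :
    PrefixHasPeriod u n m' :=
  fun k hk => h k (hk.trans_le hm)

lemma PrefixHasPeriod.apply_mod (h : PrefixHasPeriod u n m) {j : ℕ} (hj : j < n + m) :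
    u (j % n) = u j := by
  have hmul : ∀ i, n * i + j % n < n + m → u (j % n) = u (n * i + j % n) := by
    intro i
    induction i with
    | zero => simp
    | succ i ih =>
      intro hi
      rw [Nat.mul_succ] at hi ⊢
      rw [ih (by omega), ← h (n * i + j % n) (by omega)]
      congr 1
      omega
  simpa only [Nat.div_add_mod] using hmul (j / n) (by rwa [Nat.div_add_mod])

lemma PrefixHasPeriod.sum_range_add {M : Type*} [AddCommMonoid M] (h : PrefixHasPeriod u n m)
    (f : α → M) : ∑ i ∈ Finset.range (n + m), f (u i) =
      ∑ i ∈ Finset.range n, f (u i) + ∑ i ∈ Finset.range m, f (u i) := by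
  rw [Finset.sum_range_add]
  exact congrArg _ (Finset.sum_congr rfl fun i hi => by rw [h i (Finset.mem_range.1 hi)])

variable [Inhabited α]

lemma le_wordIndex (i : ℕ) (hn : 0 < n) (h : PrefixHasPeriod (fun k => u (i + k)) n m) :
    ((((n + m : ℕ) : ℝ) / n : ℝ) : EReal) ≤ wordIndex u := by
  let w := (List.range n).map fun j => u (i + j)
  have hlen : w.length = n := by simp [w]
  have hw : w ≠ [] := List.ne_nil_of_length_pos (hlen ▸ hn)
  have hpow : IsFactor (powPrefix w (n + m)) u := by
    refine ⟨i, List.ext_getElem (by simp [powPrefix]) fun j hj _ => ?_⟩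
    have hjn : j < n + m := by simpa [powPrefix] using hj
    simpa [powPrefix, hlen, List.getD_eq_getElem?_getD, w, Nat.mod_lt _ hn] using h.apply_mod hjn
  have hfactor : (((n + m : ℕ) : ℝ) / n : ℝ) ≤ factorIndex u w :=
    le_sSup ⟨n + m, by omega, hpow, by rw [hlen]⟩
  exact hfactor.trans (le_sSup ⟨w, hw, ⟨i, by rw [hlen]⟩, rfl⟩)

lemma one_le_wordIndex (u : ℕ → α) : 1 ≤ wordIndex u := by
  simpa using le_wordIndex (u := u) (n := 1) (m := 0) 0 one_pos
    fun k hk => absurd hk k.not_lt_zero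

lemma wordIndex_le {t : ℝ}
    (h : ∀ i n m, 0 < n → PrefixHasPeriod (fun k => u (i + k)) n m → m ≤ t * n) :
    wordIndex u ≤ (t + 1 : ℝ) := by
  refine sSup_le ?_
  rintro _ ⟨w, hw, -, rfl⟩
  refine sSup_le ?_
  rintro _ ⟨m, hm, ⟨i, hi⟩, rfl⟩
  have hlen : 0 < w.length := List.length_pos_iff.2 hw
  have happly : ∀ j < m, u (i + j) = w.getD (j % w.length) default := by
    intro j hj
    have := congrArg (fun l => l[j]?) hi
    simpa [powPrefix, hj] using this.symm
  have hper : PrefixHasPeriod (fun k => u (i + k)) w.length (m - w.length) := fun k hk => by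
    simp only [happly (w.length + k) (by omega), happly k (by omega), Nat.add_mod_left]
  have hle := h i _ _ hlen hper
  rw [Nat.cast_sub hm] at hle
  rw [EReal.coe_le_coe_iff, div_le_iff₀ (Nat.cast_pos.2 hlen)]
  linarith

end Index

section InducedMap

variable {ε ℓ x : ℝ}

/-- The parameter domain of the exchanges `T_{ε,ℓ}`; it forces `0 < ε < 1`. -/
structure Admissible (ε ℓ : ℝ) : Prop where
  lt : ε < ℓ
  one_sub_lt : 1 - ε < ℓ
  lt_one : ℓ < 1

lemma Admissible.pos (h : Admissible ε ℓ) : 0 < ε := by linarith [h.one_sub_lt, h.lt_one]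

lemma Admissible.eps_lt_one (h : Admissible ε ℓ) : ε < 1 := h.lt.trans h.lt_one

/-- The time after which the rotation by `-ε` returns to `[0, ℓ)` from the interval of a letter. -/
def L3.returnTime : L3 → ℕ
  | A => 1
  | B => 2
  | C => 1

/-- The translation by which `T_{ε,ℓ}` moves the interval of a letter. -/
def L3.displacement (ε : ℝ) : L3 → ℝ
  | A => 1 - ε
  | B => 1 - 2 * ε
  | C => -ε

/-- The number of steps of the rotation by `-ε` that make up the first `k` steps of an exchange with
itinerary `u`. -/
def rotationSteps (u : ℕ → L3) (k : ℕ) : ℕ := ∑ i ∈ Finset.range k, (u i).returnTime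

lemma L3.returnTime_pos (a : L3) : 0 < a.returnTime := by cases a <;> simp [returnTime]

lemma L3.coe_displacement (ε : ℝ) (a : L3) :
    (a.displacement ε : UnitAddCircle) = -(a.returnTime • (ε : UnitAddCircle)) := by
  cases a <;> simp [displacement, returnTime, AddCircle.coe_period (1 : ℝ), two_mul, two_nsmul]

lemma rotationSteps_succ (u : ℕ → L3) (k : ℕ) :
    rotationSteps u (k + 1) = rotationSteps u k + (u k).returnTime :=
  Finset.sum_range_succ _ _

lemma strictMono_rotationSteps (u : ℕ → L3) : StrictMono (rotationSteps u) :=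
  strictMono_nat_of_lt_succ fun k => by
    rw [rotationSteps_succ]
    exact Nat.lt_add_of_pos_right (u k).returnTime_pos

lemma exists_rotationSteps_le_lt (u : ℕ → L3) (j : ℕ) :
    ∃ k, rotationSteps u k ≤ j ∧ j < rotationSteps u (k + 1) := by
  simpa only [not_lt] using Nat.exists_not_and_succ_of_not_zero_of_exists
    (p := fun k => j < rotationSteps u k) (Nat.not_lt_zero j)
    ⟨j + 1, (strictMono_rotationSteps u).le_apply⟩

lemma PrefixHasPeriod.rotationSteps_add {u : ℕ → L3} {n m : ℕ} (h : PrefixHasPeriod u n m) :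
    rotationSteps u (n + m) = rotationSteps u n + rotationSteps u m :=
  h.sum_range_add L3.returnTime

lemma PrefixHasPeriod.rotationSteps_succ_mul {u : ℕ → L3} {n t : ℕ}
    (h : PrefixHasPeriod u n (t * n)) :
    rotationSteps u ((t + 1) * n) = (t + 1) * rotationSteps u n := by
  induction t with
  | zero => simp
  | succ t ih =>
    rw [add_mul, one_mul, add_comm, h.rotationSteps_add, ih (h.mono (by gcongr; omega))]
    ring

lemma prefixHasPeriod_of_rotationSteps_lt {u : ℕ → L3} {n t : ℕ}
    (h : ∀ k, rotationSteps u k < t * rotationSteps u n → u (n + k) = u k) :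
    PrefixHasPeriod u n (t * n) := by
  induction t with
  | zero => simp [PrefixHasPeriod]
  | succ t ih =>
    have hper := ih fun k hk => h k (hk.trans_le (by gcongr; omega))
    intro k hk
    exact h k (hper.rotationSteps_succ_mul ▸ strictMono_rotationSteps u hk)

lemma u3_iterate (ε ℓ x : ℝ) (i k : ℕ) :
    u3 ε ℓ ((T3 ε ℓ)^[i] x) k = u3 ε ℓ x (i + k) := by
  simp only [u3, ← Function.iterate_add_apply, add_comm k i]

lemma T3_iterate_succ (ε ℓ x : ℝ) (k : ℕ) :
    (T3 ε ℓ)^[k + 1] x = (T3 ε ℓ)^[k] x + (u3 ε ℓ x k).displacement ε := by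
  rw [Function.iterate_succ_apply', T3, u3]
  split_ifs <;> simp only [L3.displacement] <;> ring

lemma T3_iterate_eq_add_sum (ε ℓ x : ℝ) (k : ℕ) :
    (T3 ε ℓ)^[k] x = x + ∑ i ∈ Finset.range k, (u3 ε ℓ x i).displacement ε := by
  induction k with
  | zero => simp
  | succ k ih => rw [T3_iterate_succ, ih, Finset.sum_range_succ, add_assoc]

lemma coe_T3_iterate (ε ℓ x : ℝ) (k : ℕ) : ((T3 ε ℓ)^[k] x : UnitAddCircle) =
    x - rotationSteps (u3 ε ℓ x) k • (ε : UnitAddCircle) := by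
  induction k with
  | zero => simp [rotationSteps]
  | succ k ih =>
    rw [T3_iterate_succ, AddCircle.coe_add, ih, L3.coe_displacement, rotationSteps_succ]
    module

lemma Admissible.mapsTo_T3 (h : Admissible ε ℓ) :
    Set.MapsTo (T3 ε ℓ) (Set.Ico 0 ℓ) (Set.Ico 0 ℓ) := by
  rintro x ⟨h0, hℓ⟩
  obtain ⟨_, _, _⟩ := h
  rw [T3]
  split_ifs <;> constructor <;> linarith

lemma Admissible.iterate_mem (h : Admissible ε ℓ) (hx : x ∈ Set.Ico 0 ℓ) (k : ℕ) :
    (T3 ε ℓ)^[k] x ∈ Set.Ico 0 ℓ :=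
  h.mapsTo_T3.iterate k hx

lemma injOn_coe_unitAddCircle : Set.InjOn (fun y : ℝ => (y : UnitAddCircle)) (Set.Ico 0 1) :=
  fun y hy z hz hyz => by
    rw [← zero_add (1 : ℝ)] at hy hz
    exact (AddCircle.coe_eq_coe_iff_of_mem_Ico hy hz).1 hyz

lemma exists_mem_Ico_coe_eq (p : UnitAddCircle) :
    ∃ y ∈ Set.Ico (0 : ℝ) 1, (y : UnitAddCircle) = p := by
  have hp : p ∈ (fun y : ℝ => (y : UnitAddCircle)) '' Set.Ico 0 (0 + 1) :=
    AddCircle.coe_image_Ico_eq (1 : ℝ) 0 ▸ Set.mem_univ p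
  simpa using hp

lemma Admissible.Ico_subset (h : Admissible ε ℓ) : Set.Ico 0 ℓ ⊆ Set.Ico 0 1 :=
  Set.Ico_subset_Ico_right h.lt_one.le

/-- The exchange is the map induced on `[0, ℓ)` by the rotation: the only point it skips, in the
middle of the two steps of a letter `B`, lies in `[ℓ, 1)`. -/
lemma Admissible.exists_iterate_eq (h : Admissible ε ℓ) (hx : x ∈ Set.Ico 0 ℓ) {z : ℝ}
    (hz : z ∈ Set.Ico 0 ℓ) {j : ℕ} (hzj : (z : UnitAddCircle) = x - j • (ε : UnitAddCircle)) :
    ∃ k, rotationSteps (u3 ε ℓ x) k = j ∧ (T3 ε ℓ)^[k] x = z := by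
  obtain ⟨k, hkj, hjk⟩ := exists_rotationSteps_le_lt (u3 ε ℓ x) j
  obtain ⟨s, rfl⟩ := Nat.exists_eq_add_of_le hkj
  rw [rotationSteps_succ, add_lt_add_iff_left] at hjk
  have hmem := h.iterate_mem hx k
  have hzs : (z : UnitAddCircle) = (T3 ε ℓ)^[k] x - s • (ε : UnitAddCircle) := by
    rw [hzj, coe_T3_iterate]
    module
  rcases Nat.eq_zero_or_pos s with rfl | hs
  · refine ⟨k, rfl, injOn_coe_unitAddCircle (h.Ico_subset hmem) (h.Ico_subset hz) ?_⟩
    simpa using hzs.symm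
  · exfalso
    rw [u3] at hjk
    split_ifs at hjk with hA hB <;> rw [L3.returnTime] at hjk
    · omega
    · obtain rfl : s = 1 := by omega
      have hskip : z = (T3 ε ℓ)^[k] x - ε + 1 := by
        refine injOn_coe_unitAddCircle (h.Ico_subset hz)
          ⟨by linarith [h.lt, h.one_sub_lt], by linarith⟩ ?_
        simpa [AddCircle.coe_period (1 : ℝ)] using hzs
      linarith [hz.2]
    · omega

end InducedMap

section UpperBound

variable {ε ℓ x : ℝ} {n m : ℕ}

lemma T3_iterate_add_of_prefixHasPeriod (hper : PrefixHasPeriod (u3 ε ℓ x) n m) {k : ℕ}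
    (hk : k ≤ m) : (T3 ε ℓ)^[n + k] x = (T3 ε ℓ)^[k] x + ((T3 ε ℓ)^[n] x - x) := by
  simp only [T3_iterate_eq_add_sum, (hper.mono hk).sum_range_add (L3.displacement ε)]
  ring

/-- On a stretch of period `n` the exchange commutes with the translation by `δ = Tⁿ x - x`, so the
stretch misses an end interval of `[0, ℓ)` of length `|δ|`. -/
lemma Admissible.rotationSteps_lt_of_prefixHasPeriod (h : Admissible ε ℓ) (hε : Irrational ε)
    (hx : x ∈ Set.Ico 0 ℓ) (hper : PrefixHasPeriod (u3 ε ℓ x) n m) {r : ℕ}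
    (hr : |convergentError ε r| ≤ |(T3 ε ℓ)^[n] x - x|) :
    rotationSteps (u3 ε ℓ x) m < qq ε (r + 1) + qq ε r := by
  by_contra! hle
  set δ := (T3 ε ℓ)^[n] x - x with hδ
  have hvisit : ∀ c, 0 ≤ c → c + |convergentError ε r| ≤ ℓ →
      ∃ z ∈ Set.Ico c (c + |convergentError ε r|), z + δ ∈ Set.Ico 0 ℓ := by
    intro c hc hcℓ
    obtain ⟨j, hj, z, hz, hzj⟩ := exists_lt_orbit_mem_Ico hε h.pos h.eps_lt_one r x c
    obtain ⟨k, rfl, rfl⟩ := h.exists_iterate_eq hx ⟨hc.trans hz.1, hz.2.trans_le hcℓ⟩ hzj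
    have hk : k < m := (strictMono_rotationSteps _).lt_iff_lt.1 (hj.trans_le hle)
    exact ⟨_, hz, T3_iterate_add_of_prefixHasPeriod hper hk.le ▸ h.iterate_mem hx (n + k)⟩
  have hn := h.iterate_mem hx n
  rcases le_or_gt 0 δ with hpos | hneg
  · rw [abs_of_nonneg hpos] at hr
    obtain ⟨z, hz, hzδ⟩ := hvisit (ℓ - |convergentError ε r|)
      (by linarith [hn.2, hx.1]) (sub_add_cancel _ _).le
    linarith [hz.1, hzδ.2]
  · rw [abs_of_neg hneg] at hr
    obtain ⟨z, hz, hzδ⟩ := hvisit 0 le_rfl (by linarith [hn.1, hx.2])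
    linarith [hz.2, hzδ.1]

lemma Admissible.lt_mul_of_prefixHasPeriod (h : Admissible ε ℓ) (hε : Irrational ε)
    (hx : x ∈ Set.Ico 0 ℓ) {K : ℕ} (hK : ∀ r, cfa ε r ≤ K) (hn : 0 < n)
    (hper : PrefixHasPeriod (u3 ε ℓ x) n m) : m < (K + 2) * n := by
  by_contra! hle
  replace hper := hper.mono hle
  let N := rotationSteps (u3 ε ℓ x) n
  have hN : 0 < N := (strictMono_rotationSteps (u3 ε ℓ x)).lt_iff_lt.2 hn
  obtain ⟨r, hrN, hNr⟩ := exists_qq_succ_le_lt hε h.pos h.eps_lt_one hN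
  have hδ : |convergentError ε (r + 1)| ≤ |(T3 ε ℓ)^[n] x - x| :=
    calc |convergentError ε (r + 1)|
      _ ≤ ‖N • (ε : UnitAddCircle)‖ := abs_convergentError_le_norm_nsmul hε h.pos hN hNr
      _ = ‖(((T3 ε ℓ)^[n] x - x : ℝ) : UnitAddCircle)‖ := by
        rw [AddCircle.coe_sub, coe_T3_iterate, sub_sub_cancel_left, norm_neg]
      _ ≤ |(T3 ε ℓ)^[n] x - x| := QuotientAddGroup.norm_mk_le_norm
  have hlt := h.rotationSteps_lt_of_prefixHasPeriod hε hx hper hδ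
  rw [PrefixHasPeriod.rotationSteps_succ_mul (hper.mono (by gcongr; omega))] at hlt
  have hbound : qq ε (r + 2) + qq ε (r + 1) ≤ (K + 2) * qq ε (r + 1) := by
    have := Nat.mul_le_mul_right (qq ε (r + 1)) (hK r)
    linarith [qq_add_two ε r, qq_le_qq_succ hε h.pos h.eps_lt_one r]
  exact (hlt.trans_le (hbound.trans (Nat.mul_le_mul_left _ hrN))).false

lemma Admissible.wordIndex_u3_le (h : Admissible ε ℓ) (hε : Irrational ε)
    (hx : x ∈ Set.Ico 0 ℓ) {K : ℕ} (hK : ∀ r, cfa ε r ≤ K) :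
    wordIndex (u3 ε ℓ x) ≤ ((K + 3 : ℝ) : EReal) := by
  have hle : wordIndex (u3 ε ℓ x) ≤ ((K + 2 + 1 : ℝ) : EReal) :=
    wordIndex_le fun i n m hn hper => by
      simp only [← u3_iterate] at hper
      exact_mod_cast (h.lt_mul_of_prefixHasPeriod hε (h.iterate_mem hx i) hK hn hper).le
  convert hle using 2
  ring

end UpperBound

section LowerBound

variable {ε ℓ x δ : ℝ} {M : ℕ}

lemma u3_add_zero_of_clearsCut (h0 : ClearsCut 0 δ (x - ε : ℝ)) (hℓ : ClearsCut ℓ δ (x - ε : ℝ)) :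
    u3 ε ℓ (x + δ) 0 = u3 ε ℓ x 0 := by
  replace hℓ : ClearsCut (ℓ - 1 : ℝ) δ (x - ε : ℝ) := by
    rwa [AddCircle.coe_sub, AddCircle.coe_period, sub_zero]
  have hA : x + δ < ℓ - 1 + ε ↔ x < ℓ - 1 + ε := by
    simpa only [sub_add_eq_add_sub, sub_lt_iff_lt_add] using hℓ.add_lt_iff
  have hC : x + δ < ε ↔ x < ε := by
    simpa only [sub_add_eq_add_sub, sub_neg] using ClearsCut.add_lt_iff (c := 0) h0
  exact if_congr hA rfl (if_congr hC rfl rfl)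

lemma u3_add_of_forall_clearsCut
    (hclear : ∀ j, 1 ≤ j → j ≤ M → ClearsCut 0 δ (x - j • (ε : UnitAddCircle)) ∧
      ClearsCut ℓ δ (x - j • (ε : UnitAddCircle)))
    {k : ℕ} (hk : rotationSteps (u3 ε ℓ x) k < M) : u3 ε ℓ (x + δ) k = u3 ε ℓ x k := by
  induction k using Nat.strong_induction_on with
  | _ k ih =>
    have hprev : ∀ i ∈ Finset.range k, u3 ε ℓ (x + δ) i = u3 ε ℓ x i := fun i hi =>
      have hik := Finset.mem_range.1 hi
      ih i hik ((strictMono_rotationSteps _ hik).trans hk)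
    have htranslate : (T3 ε ℓ)^[k] (x + δ) = (T3 ε ℓ)^[k] x + δ := by
      rw [T3_iterate_eq_add_sum, T3_iterate_eq_add_sum ε ℓ x, add_right_comm,
        Finset.sum_congr rfl fun i hi => by rw [hprev i hi]]
    have hcoe : (((T3 ε ℓ)^[k] x - ε : ℝ) : UnitAddCircle) =
        x - (rotationSteps (u3 ε ℓ x) k + 1) • (ε : UnitAddCircle) := by
      rw [AddCircle.coe_sub, coe_T3_iterate]
      module
    obtain ⟨h0, hℓ⟩ := hclear _ (Nat.le_add_left 1 _) hk
    rw [← hcoe] at h0 hℓ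
    calc u3 ε ℓ (x + δ) k
      _ = u3 ε ℓ ((T3 ε ℓ)^[k] (x + δ)) 0 := (u3_iterate ε ℓ (x + δ) k 0).symm
      _ = u3 ε ℓ ((T3 ε ℓ)^[k] x + δ) 0 := by rw [htranslate]
      _ = u3 ε ℓ ((T3 ε ℓ)^[k] x) 0 := u3_add_zero_of_clearsCut h0 hℓ
      _ = u3 ε ℓ x k := u3_iterate ε ℓ x k 0

/-- A point `y` of the gap `[ℓ, 1)` is not visited by the exchange, and is replaced by its
predecessor `y + ε - 1` on the orbit, in the interval of the letter `B`. -/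
lemma Admissible.exists_mem_Ico_of_clearsCut (h : Admissible ε ℓ) {y : ℝ}
    (hy : y ∈ Set.Ico 0 1) (h0 : ClearsCut 0 δ y) (hℓ : ClearsCut ℓ δ y) :
    ∃ s ≤ 1, ∃ z ∈ Set.Ico 0 ℓ, z + δ ∈ Set.Ico 0 ℓ ∧
      (z : UnitAddCircle) = y + s • (ε : UnitAddCircle) := by
  have hlt0 : y + δ < 0 ↔ y < 0 := h0.add_lt_iff
  have hltℓ : y + δ < ℓ ↔ y < ℓ := hℓ.add_lt_iff
  have hlt1 : y + δ < 1 ↔ y < 1 := ClearsCut.add_lt_iff (by rwa [AddCircle.coe_period])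
  rcases lt_or_ge y ℓ with hyℓ | hyℓ
  · exact ⟨0, zero_le_one, y, ⟨hy.1, hyℓ⟩, ⟨not_lt.1 (hlt0.not.2 hy.1.not_gt), hltℓ.2 hyℓ⟩,
      by rw [zero_nsmul, add_zero]⟩
  · have hδℓ := not_lt.1 (hltℓ.not.2 hyℓ.not_gt)
    have hδ1 := hlt1.2 hy.2
    refine ⟨1, le_rfl, y + ε - 1, ⟨?_, ?_⟩, ⟨?_, ?_⟩, ?_⟩
    · linarith [h.one_sub_lt]
    · linarith [hy.2, h.lt]
    · linarith [h.one_sub_lt]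
    · linarith [h.lt]
    · simp [AddCircle.coe_period (1 : ℝ)]

lemma Admissible.exists_iterate_forall_clearsCut (h : Admissible ε ℓ) (hε : Irrational ε)
    (hx : x ∈ Set.Ico 0 ℓ) (hM : 2 * (M + 1) * |δ| < 1) :
    ∃ i, (T3 ε ℓ)^[i] x + δ ∈ Set.Ico 0 ℓ ∧ ∀ j, 1 ≤ j → j ≤ M →
      ClearsCut 0 δ ((T3 ε ℓ)^[i] x - j • (ε : UnitAddCircle)) ∧
      ClearsCut ℓ δ ((T3 ε ℓ)^[i] x - j • (ε : UnitAddCircle)) := by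
  classical
  have hcard : (M + 1) * (Finset.card {0, (ℓ : UnitAddCircle)} : ℝ) * |δ| < 1 := by
    refine lt_of_le_of_lt ?_ hM
    rw [mul_comm 2]
    gcongr
    exact_mod_cast Finset.card_le_two
  obtain ⟨i, hi⟩ := exists_orbit_forall_clearsCut hε (x - ε : UnitAddCircle) _ hcard
  obtain ⟨y, hy, hyi⟩ : ∃ y ∈ Set.Ico (0 : ℝ) 1,
      (y : UnitAddCircle) = x - ε - i • (ε : UnitAddCircle) := exists_mem_Ico_coe_eq _
  rw [← hyi] at hi
  have h0 := hi 0 (by simp)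
  have hℓ := hi ℓ (by simp)
  obtain ⟨s, hs, z, hz, hzδ, hzs⟩ := h.exists_mem_Ico_of_clearsCut hy
    (by simpa using h0 0 (Nat.zero_le _)) (by simpa using hℓ 0 (Nat.zero_le _))
  obtain ⟨t, ht⟩ := Nat.exists_eq_add_of_le hs
  have hεst : (ε : UnitAddCircle) = s • (ε : UnitAddCircle) + t • (ε : UnitAddCircle) := by
    rw [← add_nsmul, ← ht, one_nsmul]
  have hzit : (z : UnitAddCircle) = x - (i + t) • (ε : UnitAddCircle) := by
    linear_combination (norm := module) hzs + hyi - hεst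
  obtain ⟨k, -, rfl⟩ := h.exists_iterate_eq hx hz hzit
  refine ⟨k, hzδ, fun j hj hjM => ?_⟩
  obtain ⟨j, rfl⟩ := Nat.exists_eq_add_of_le hj
  have hshift : ((T3 ε ℓ)^[k] x - (1 + j) • (ε : UnitAddCircle)) =
      y - (t + j) • (ε : UnitAddCircle) := by
    linear_combination (norm := module) hzs - hεst
  rw [hshift]
  exact ⟨h0 _ (by omega), hℓ _ (by omega)⟩

lemma Admissible.exists_prefixHasPeriod (h : Admissible ε ℓ) (hε : Irrational ε)
    (hx : x ∈ Set.Ico 0 ℓ) {r t : ℕ}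
    (ht : 2 * (t * qq ε (r + 1) + 1) * |convergentError ε (r + 1)| < 1) :
    ∃ i n, 0 < n ∧ PrefixHasPeriod (fun k => u3 ε ℓ x (i + k)) n (t * n) := by
  obtain ⟨i, hmem, hclear⟩ := h.exists_iterate_forall_clearsCut hε hx
    (M := t * qq ε (r + 1)) (δ := -convergentError ε (r + 1)) (by rwa [abs_neg, Nat.cast_mul])
  set y := (T3 ε ℓ)^[i] x
  obtain ⟨n, hn, hny⟩ := h.exists_iterate_eq (j := qq ε (r + 1)) (h.iterate_mem hx i) hmem
    (by rw [AddCircle.coe_add, AddCircle.coe_neg, coe_convergentError, sub_eq_add_neg])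
  have hpos : 0 < n := by
    rw [← (strictMono_rotationSteps (u3 ε ℓ y)).lt_iff_lt, hn]
    exact one_le_qq_succ hε h.pos h.eps_lt_one r
  refine ⟨i, n, hpos, ?_⟩
  simp only [← u3_iterate]
  refine prefixHasPeriod_of_rotationSteps_lt fun k hk => ?_
  rw [← u3_iterate, hny]
  exact u3_add_of_forall_clearsCut hclear (hn ▸ hk)

lemma Admissible.cfa_div_two_le_wordIndex_u3 (h : Admissible ε ℓ) (hε : Irrational ε)
    (hx : x ∈ Set.Ico 0 ℓ) (r : ℕ) : ((cfa ε r / 2 : ℕ) : EReal) ≤ wordIndex (u3 ε ℓ x) := by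
  rcases hr : cfa ε r / 2 with _ | t
  · rw [Nat.cast_zero]
    exact zero_le_one.trans (one_le_wordIndex _)
  · have hle : 2 * (t * qq ε (r + 1) + 1) ≤ qq ε (r + 2) := by
      have hmul := Nat.mul_le_mul_right (qq ε (r + 1)) (by omega : 2 * (t + 1) ≤ cfa ε r)
      linarith [qq_add_two ε r, one_le_qq_succ hε h.pos h.eps_lt_one r]
    have ht : 2 * (t * qq ε (r + 1) + 1) * |convergentError ε (r + 1)| < 1 :=
      calc 2 * (t * qq ε (r + 1) + 1) * |convergentError ε (r + 1)|
        _ ≤ qq ε (r + 2) * |convergentError ε (r + 1)| := by gcongr; exact_mod_cast hle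
        _ < 1 := qq_succ_mul_abs_convergentError_lt_one hε h.pos h.eps_lt_one r
    obtain ⟨i, n, hn, hper⟩ := h.exists_prefixHasPeriod hε hx ht
    convert le_wordIndex i hn hper
    rw [← EReal.coe_natCast, EReal.coe_eq_coe_iff, eq_div_iff (Nat.cast_ne_zero.2 hn.ne')]
    push_cast
    ring

end LowerBound

/-- if the partial quotients of `ε` are bounded with supremum `K`, then
`⌊K/2⌋ ≤ ind(u_{ε,ℓ,x0}) ≤ K + 3`. -/
theorem threeIet_index_bounds
    (ε ℓ x0 : ℝ) (hirr : Irrational ε) (h0 : 0 < ε) (h1 : ε < 1)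
    (hl : max ε (1 - ε) < ℓ) (hl1 : ℓ < 1) (hx0 : x0 ∈ Set.Ico 0 ℓ)
    (K : ℕ) (hK : IsLUB (Set.range (cfa ε)) K) :
    ((K / 2 : ℕ) : EReal) ≤ wordIndex (u3 ε ℓ x0) ∧
      wordIndex (u3 ε ℓ x0) ≤ (((K : ℝ) + 3 : ℝ) : EReal) := by
  have h : Admissible ε ℓ := ⟨(max_lt_iff.1 hl).1, (max_lt_iff.1 hl).2, hl1⟩
  obtain ⟨r, rfl⟩ : K ∈ Set.range (cfa ε) :=
    hK.csSup_eq (Set.range_nonempty _) ▸ Nat.sSup_mem (Set.range_nonempty _) hK.bddAbove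
  exact ⟨h.cfa_div_two_le_wordIndex_u3 hirr hx0 r,
    h.wordIndex_u3_le hirr hx0 fun n => hK.1 ⟨n, rfl⟩⟩
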